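/- Let Q_n(8,4) (n ≥ 2) be the Möbius octagonal-quadrilateral network: the simple graph on the 8n vertices u_1,…,u_{4n}, v_1,…,v_{4n} whose edges are u_i u_{i+1} and v_i v_{i+1} for 1 ≤ i ≤ 4n−1, u_i v_i for every i ≡ 0 or 1 (mod 4), and the two twisted edges u_1 v_{4n} and v_1 u_{4n}. Let W(Q_n(8,4)) denote its Wiener index and Kf(Q_n(8,4)) = 8n · ∑_{k=2}^{8n} 1/μ_k its Kirchhoff index, where 0 = μ_1 < μ_2 ≤ ⋯ ≤ μ_{8n} are the eigenvalues of its Laplacian matrix. Then lim_{n→∞} W(Q_n(8,4))/Kf(Q_n(8,4)) = 3. -/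

import Mathlib

/-!
Both indices are cubic in `n`: `W = 32 n³ + O(n²)` and `Kf = (32/3) n³ + O(n²)`, so the ratio tends
to `3`.

*Wiener index.* Group the vertices into the `4n` columns `{u_i, v_i}`. Every edge stays in a column
or moves to a cyclically neighbouring one, and a change of side costs at most three edges, since
every column is next to one with a rung or has one itself. Hence the distance of two vertices
exceeds the distance of their columns on the cycle of length `4n` by at most `3` (`cyc_le_dist`,
`dist_le_cyc`), and the sum of distances over the cycle is explicit.

*Kirchhoff index.* Take an orthonormal eigenbasis `e_v` of the Laplacian `L`, with eigenvalues
`m_v`. On functions that depend only on the column, `L` is the Laplacian of the cycle (`lap_pos`),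
which has the explicit Green kernel `-d (N - d) / (2N)`, `N = 4n` (`green_lap`). Evaluating the
kernel on `e_v` gives `2 m_v⁻¹ ‖symmetric part of e_v‖²` up to a term for the constant eigenvector
(`eigen_green'`). Summing over `v` gives the trace of the kernel, which is zero, so the symmetric
parts contribute exactly `(16 n² - 1) / 12` to `∑ m_v⁻¹`. The antisymmetric parts contribute `O(n)`,
because `L` is bounded below on them uniformly in `n` (`sum_sq_antisymm_le`). The convention
`0⁻¹ = 0` allows sums over the whole spectrum throughout.
-/


/-- Underlying relation of the Möbius octagonal-quadrilateral network `Q_n(8,4)`: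
`Sum.inl i` is the vertex `u_{i+1}`, `Sum.inr i` is the vertex `v_{i+1}`. -/
def mobiusRel (n : ℕ) : (Fin (4 * n) ⊕ Fin (4 * n)) → (Fin (4 * n) ⊕ Fin (4 * n)) → Prop
  | Sum.inl i, Sum.inl j => i.val + 1 = j.val
  | Sum.inr i, Sum.inr j => i.val + 1 = j.val
  | Sum.inl i, Sum.inr j =>
      (i = j ∧ ((i.val + 1) % 4 = 0 ∨ (i.val + 1) % 4 = 1)) ∨
      (i.val = 0 ∧ j.val = 4 * n - 1) ∨ (i.val = 4 * n - 1 ∧ j.val = 0)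
  | Sum.inr _, Sum.inl _ => False

instance (n : ℕ) : DecidableRel (mobiusRel n) := fun a b => by
  rcases a with i | i <;> rcases b with j | j <;> simp only [mobiusRel] <;> infer_instance

/-- The Möbius octagonal-quadrilateral network `Q_n(8,4)`. -/
def mobius (n : ℕ) : SimpleGraph (Fin (4 * n) ⊕ Fin (4 * n)) :=
  SimpleGraph.fromRel (mobiusRel n)

instance (n : ℕ) : DecidableRel (mobius n).Adj := fun a b =>
  decidable_of_iff (a ≠ b ∧ (mobiusRel n a b ∨ mobiusRel n b a)) Iff.rfl

/-! ### Eigenbases of real symmetric matrices -/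

/-- Spectral theorem in coordinates: `e v` is an orthonormal eigenbasis and `l v` are the
eigenvalues. The third clause is the completeness relation `∑ v, e v (e v)ᵀ = 1`. -/
theorem exists_eigendata {V : Type*} [Fintype V] [DecidableEq V] (A : Matrix V V ℝ)
    (hA : A.IsHermitian) :
    ∃ (e : V → V → ℝ) (l : V → ℝ), (∀ v, A.mulVec (e v) = l v • e v) ∧
      (∀ v, ∑ x, e v x ^ 2 = 1) ∧ (∀ x y, ∑ v, e v x * e v y = if x = y then 1 else 0) ∧
      A.charpoly = ∏ v, (Polynomial.X - Polynomial.C (l v)) := by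
  refine ⟨fun v x => (hA.eigenvectorUnitary : Matrix V V ℝ) x v, hA.eigenvalues, ?_, ?_, ?_, ?_⟩
  · intro v
    exact hA.mulVec_eigenvectorBasis v
  · intro v
    have h := congrFun (congrFun (Matrix.UnitaryGroup.star_mul_self hA.eigenvectorUnitary) v) v
    rw [Matrix.mul_apply] at h
    simpa [Matrix.star_apply, sq] using h
  · intro x y
    have h := (Matrix.mem_unitaryGroup_iff.1 hA.eigenvectorUnitary.2)
    have h := congrFun (congrFun h x) y
    rw [Matrix.mul_apply] at h
    simpa [Matrix.star_apply, Matrix.one_apply] using h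
  · simpa using hA.charpoly_eq

/-- The trace of `M` is the sum of its quadratic form over an orthonormal basis. -/
theorem trace_identity {V : Type*} [Fintype V] [DecidableEq V] (e : V → V → ℝ)
    (h : ∀ x y, ∑ v, e v x * e v y = if x = y then 1 else 0) (M : V → V → ℝ) :
    ∑ v, ∑ x, ∑ y, e v x * M x y * e v y = ∑ x, M x x := by
  rw [Finset.sum_comm]
  refine Finset.sum_congr rfl fun x _ => ?_
  rw [Finset.sum_comm]
  have : ∀ y, ∑ v, e v x * M x y * e v y = if x = y then M x y else 0 := by
    intro y
    rw [← mul_boole, ← h, Finset.mul_sum]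
    exact Finset.sum_congr rfl fun v _ => by ring
  simp [this]

/-- Two listings of the roots of one polynomial have the same sum of inverses (with `0⁻¹ = 0`). -/
theorem sum_inv_of_prod_eq {V : Type*} [Fintype V] (l m : V → ℝ)
    (h : ∏ v, (Polynomial.X - Polynomial.C (l v)) = ∏ v, (Polynomial.X - Polynomial.C (m v))) :
    ∑ v, (l v)⁻¹ = ∑ v, (m v)⁻¹ := by
  have hr : ∀ l : V → ℝ, (∏ v, (Polynomial.X - Polynomial.C (l v))).roots =
      Finset.univ.val.map l := by
    intro l
    have := Polynomial.roots_multiset_prod_X_sub_C (Finset.univ.val.map l)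
    rwa [Multiset.map_map] at this
  have h1 : Finset.univ.val.map l = Finset.univ.val.map m := by rw [← hr, ← hr, h]
  have h2 := congrArg (fun s => (s.map fun t : ℝ => t⁻¹).sum) h1
  simpa [Multiset.map_map] using h2

/-! ### Sums over pairs of points of a cycle -/

/-- The distance `|i - j|` of two natural numbers (one of the truncated differences is `0`). -/
def nd (i j : ℕ) : ℕ := (i - j) + (j - i)

/-- A function of `|i - j|` that is invariant under `k ↦ N - k` lives on the cycle of length
`N = M + 1`, so its sum over `j` does not depend on `i`. -/
theorem sum_nd (M : ℕ) (F : ℕ → ℝ) (hF : ∀ k, k ≤ M + 1 → F (M + 1 - k) = F k) (i : ℕ)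
    (hi : i < M + 1) :
    ∑ j ∈ Finset.range (M + 1), F (nd i j) = ∑ j ∈ Finset.range (M + 1), F j := by
  induction i with
  | zero => simp [nd]
  | succ i ih =>
    rw [← ih (by omega), Finset.sum_range_succ', Finset.sum_range_succ]
    have h1 : nd (i + 1) 0 = i + 1 := by simp [nd]
    have h2 : nd i M = M + 1 - (i + 1) := by unfold nd; omega
    rw [h1, h2, hF (i + 1) (by omega)]
    congr 1
    refine Finset.sum_congr rfl fun j _ => ?_
    congr 1
    unfold nd; omega

theorem sum_sum_nd (N : ℕ) (F : ℕ → ℝ) (hF : ∀ k, k ≤ N → F (N - k) = F k) :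
    ∑ i : Fin N, ∑ j : Fin N, F (nd i j) = N * ∑ k ∈ Finset.range N, F k := by
  cases N with
  | zero => simp
  | succ M =>
    have h : ∀ i : Fin (M + 1), ∑ j : Fin (M + 1), F (nd i j) = ∑ k ∈ Finset.range (M + 1), F k :=
      fun i => by
        rw [Fin.sum_univ_eq_sum_range (fun j => F (nd i j))]
        exact sum_nd M F hF i i.2
    rw [Finset.sum_congr rfl fun i _ => h i]
    simp

theorem sum_parabola (N : ℕ) :
    ∑ k ∈ Finset.range N, (k : ℝ) * (N - k) = N * ((N : ℝ) ^ 2 - 1) / 6 := by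
  have h : ∀ (m : ℕ) (c : ℝ), ∑ k ∈ Finset.range m, (k : ℝ) * (c - k)
      = c * (m * (m - 1)) / 2 - m * (m - 1) * (2 * m - 1) / 6 := by
    intro m c
    induction m with
    | zero => simp
    | succ m ih => rw [Finset.sum_range_succ, ih]; push_cast; ring
  rw [h]; ring

theorem sum_tent (m : ℕ) :
    ∑ k ∈ Finset.range (m + m), (min k (m + m - k) : ℕ) = m ^ 2 := by
  rw [Finset.sum_range_add, ← Finset.sum_add_distrib, Finset.sum_congr rfl (g := fun _ => m)]
  · simp [sq]
  · intro k hk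
    have := Finset.mem_range.1 hk
    omega

/-! ### The columns and the Laplacian -/

/-- The vertex of side `s` in column `i`: `u` for `s = false`, `v` for `s = true`. Columns are
numbered from `0`, so that rungs sit at the columns congruent to `0` or `3` modulo `4`. -/
def vtx {n : ℕ} (s : Bool) (i : Fin (4 * n)) : Fin (4 * n) ⊕ Fin (4 * n) :=
  if s then Sum.inr i else Sum.inl i

/-- The column of a vertex. -/
def pos {n : ℕ} : Fin (4 * n) ⊕ Fin (4 * n) → Fin (4 * n) := Sum.elim id id

@[simp] theorem pos_vtx {n : ℕ} (s : Bool) (i : Fin (4 * n)) : pos (vtx s i) = i := by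
  cases s <;> rfl

theorem exists_vtx {n : ℕ} (x : Fin (4 * n) ⊕ Fin (4 * n)) : ∃ s i, x = vtx s i := by
  rcases x with i | i
  · exact ⟨false, i, rfl⟩
  · exact ⟨true, i, rfl⟩

theorem sum_vtx {n : ℕ} (s : Bool) (f : Fin (4 * n) ⊕ Fin (4 * n) → ℝ) :
    ∑ x, f x = ∑ i, (f (vtx s i) + f (vtx (!s) i)) := by
  rw [Fintype.sum_sum_type, Finset.sum_add_distrib]
  cases s <;> simp [vtx, add_comm]

theorem adj_same {n : ℕ} (s : Bool) (i j : Fin (4 * n)) :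
    (mobius n).Adj (vtx s i) (vtx s j) ↔ i.val + 1 = j.val ∨ j.val + 1 = i.val := by
  cases s <;> simp [vtx, mobius, SimpleGraph.fromRel_adj, mobiusRel] <;> grind

/-- Edges between the two sides: rungs, and the two twisted edges. -/
theorem adj_diff {n : ℕ} (s : Bool) (i j : Fin (4 * n)) :
    (mobius n).Adj (vtx s i) (vtx (!s) j) ↔
      (i.val = j.val ∧ (i.val % 4 = 0 ∨ i.val % 4 = 3)) ∨
      (i.val = 0 ∧ j.val = 4 * n - 1) ∨ (i.val = 4 * n - 1 ∧ j.val = 0) := by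
  cases s <;> simp [vtx, mobius, SimpleGraph.fromRel_adj, mobiusRel, Fin.ext_iff] <;> omega

/-- The next column, cyclically. -/
def cycSucc {n : ℕ} (i : Fin (4 * n)) : Fin (4 * n) :=
  ⟨if i.val + 1 < 4 * n then i.val + 1 else 0, by split_ifs <;> omega⟩

/-- The previous column, cyclically. -/
def cycPred {n : ℕ} (i : Fin (4 * n)) : Fin (4 * n) :=
  ⟨if i.val = 0 then 4 * n - 1 else i.val - 1, by split_ifs <;> omega⟩

theorem lap_apply {n : ℕ} (f : Fin (4 * n) ⊕ Fin (4 * n) → ℝ) (x : Fin (4 * n) ⊕ Fin (4 * n)) :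
    ((mobius n).lapMatrix ℝ).mulVec f x = ∑ y, if (mobius n).Adj x y then f x - f y else 0 := by
  rw [SimpleGraph.lapMatrix_mulVec_apply, SimpleGraph.degree_eq_sum_if_adj, Finset.sum_mul,
    SimpleGraph.neighborFinset_eq_filter, Finset.sum_filter, ← Finset.sum_sub_distrib]
  refine Finset.sum_congr rfl fun y _ => ?_
  split_ifs <;> simp

/-- On functions of the column alone the Laplacian is that of the cycle of length `4 * n`: the
rungs cancel, and each column has exactly one edge end going to either neighbouring column. -/
theorem lap_pos {n : ℕ} (h : Fin (4 * n) → ℝ) (x : Fin (4 * n) ⊕ Fin (4 * n)) :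
    ((mobius n).lapMatrix ℝ).mulVec (fun y => h (pos y)) x =
      2 * h (pos x) - h (cycSucc (pos x)) - h (cycPred (pos x)) := by
  obtain ⟨s, i, rfl⟩ := exists_vtx x
  rw [lap_apply, sum_vtx s]
  simp only [pos_vtx, adj_same, adj_diff]
  have key : ∀ j : Fin (4 * n),
      ((if i.val + 1 = j.val ∨ j.val + 1 = i.val then h i - h j else 0) +
        (if (i.val = j.val ∧ (i.val % 4 = 0 ∨ i.val % 4 = 3)) ∨
          (i.val = 0 ∧ j.val = 4 * n - 1) ∨ (i.val = 4 * n - 1 ∧ j.val = 0)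
          then h i - h j else 0)) =
      (if j = cycSucc i then h i - h j else 0) + (if j = cycPred i then h i - h j else 0) := by
    intro j
    have hi := i.2
    have hj := j.2
    by_cases hij : i = j
    · subst hij; simp
    · have hij' : i.val ≠ j.val := fun h => hij (Fin.ext h)
      have h1 : j = cycSucc i ↔ (i.val + 1 = j.val ∨ (i.val = 4 * n - 1 ∧ j.val = 0)) := by
        rw [Fin.ext_iff]; simp only [cycSucc]; split_ifs <;> omega
      have h2 : j = cycPred i ↔ (j.val + 1 = i.val ∨ (i.val = 0 ∧ j.val = 4 * n - 1)) := by
        rw [Fin.ext_iff]; simp only [cycPred]; split_ifs <;> omega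
      simp only [h1, h2]
      split_ifs <;> first | omega | simp
  rw [Finset.sum_congr rfl fun j _ => key j, Finset.sum_add_distrib]
  simp
  ring

/-- A Green kernel of the cycle of length `N`, as a function of the distance `d` of two positions.
The additive constant is chosen so that it vanishes at `d = 0`. -/
noncomputable def green (N : ℕ) (d : ℕ) : ℝ := -((d : ℝ) * (N - d)) / (2 * N)

theorem green_symm {N k : ℕ} (hk : k ≤ N) : green N (N - k) = green N k := by
  unfold green; rw [Nat.cast_sub hk]; ring

/-- The cycle Laplacian takes the Green kernel to `δ - 1 / N`, with `N = 4 * n`. -/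
theorem green_lap {n : ℕ} (k i : Fin (4 * n)) :
    2 * green (4 * n) (nd k i) - green (4 * n) (nd k (cycSucc i)) -
      green (4 * n) (nd k (cycPred i)) = (if k = i then 1 else 0) - 1 / (4 * n : ℝ) := by
  have hi := i.2
  have hk := k.2
  have hn : (0 : ℝ) < n := by
    have : 0 < n := by omega
    exact_mod_cast this
  have hn' : (n : ℝ) ≠ 0 := hn.ne'
  have hs : (cycSucc i).val = if i.val + 1 < 4 * n then i.val + 1 else 0 := rfl
  have hp : (cycPred i).val = if i.val = 0 then 4 * n - 1 else i.val - 1 := rfl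
  rw [hs, hp]
  simp only [Fin.ext_iff]
  generalize i.val = a at *
  generalize k.val = b at *
  -- values of `green` expressed through the signed difference of positions
  have g1 : ∀ c, c < 4 * n → b ≤ c →
      green (4 * n) (nd b c) = -(((c : ℝ) - b) * (4 * n - (c - b))) / (8 * n) := by
    intro c _ hbc
    have : nd b c = c - b := by unfold nd; omega
    rw [this, green, Nat.cast_sub hbc]; push_cast; ring
  have g2 : ∀ c, c ≤ b →
      green (4 * n) (nd b c) = -(((b : ℝ) - c) * (4 * n - (b - c))) / (8 * n) := by
    intro c hbc
    have : nd b c = b - c := by unfold nd; omega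
    rw [this, green, Nat.cast_sub hbc]; push_cast; ring
  -- moving past an end of the line is the same as continuing round the cycle
  have e1 : green (4 * n) (nd b (if a + 1 < 4 * n then a + 1 else 0)) =
      if b ≤ a then -(((a : ℝ) + 1 - b) * (4 * n - (a + 1 - b))) / (8 * n)
      else -(((b : ℝ) - (a + 1)) * (4 * n - (b - (a + 1)))) / (8 * n) := by
    split_ifs with h1 h2 h2
    · rw [g1 _ h1 (by omega)]; push_cast; ring
    · rw [g2 _ (by omega)]; push_cast; ring
    · rw [g2 _ (by omega)]
      have : (a : ℝ) + 1 = 4 * n := by exact_mod_cast (by omega : a + 1 = 4 * n)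
      rw [this]; push_cast; ring
    · omega
  have e2 : green (4 * n) (nd b (if a = 0 then 4 * n - 1 else a - 1)) =
      if b < a then -(((a : ℝ) - 1 - b) * (4 * n - (a - 1 - b))) / (8 * n)
      else -(((b : ℝ) - (a - 1)) * (4 * n - (b - (a - 1)))) / (8 * n) := by
    split_ifs with h1 h2 h2
    · omega
    · rw [g1 _ (by omega) (by omega), Nat.cast_sub (by omega)]
      subst h1; push_cast; ring
    · rw [g1 _ (by omega) (by omega), Nat.cast_sub (by omega)]; push_cast; ring
    · rw [g2 _ (by omega), Nat.cast_sub (by omega)]; push_cast; ring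
  rw [e1, e2]
  rcases lt_trichotomy b a with h | h | h
  · rw [g1 a hi h.le, if_pos h.le, if_pos h, if_neg h.ne]; field_simp; ring
  · subst h; rw [g1 b hi le_rfl]; simp; field_simp; ring
  · rw [g2 a h.le, if_neg (by omega), if_neg (by omega), if_neg (by omega)]; field_simp; ring

/-! ### Distances and the Wiener index -/

/-- The distance on the cycle of length `N` between two positions at linear distance `d`. -/
def cyc (N d : ℕ) : ℕ := min d (N - d)

/-- The column of a walk moves by at most one step of the cycle along each edge. -/
theorem cyc_le_length {n : ℕ} {x y : Fin (4 * n) ⊕ Fin (4 * n)} (p : (mobius n).Walk x y) :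
    cyc (4 * n) (nd (pos x) (pos y)) ≤ p.length := by
  induction p with
  | nil => simp [cyc, nd]
  | @cons a b c h p ih =>
    rw [SimpleGraph.Walk.length_cons]
    refine le_trans ?_ (Nat.add_le_add_right ih 1)
    obtain ⟨s, i, rfl⟩ := exists_vtx a
    obtain ⟨t, j, rfl⟩ := exists_vtx b
    have hi := i.2
    have hj := j.2
    have hc := (pos c).2
    have hadj : i.val = j.val ∨ i.val + 1 = j.val ∨ j.val + 1 = i.val ∨
        (i.val = 0 ∧ j.val = 4 * n - 1) ∨ (i.val = 4 * n - 1 ∧ j.val = 0) := by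
      by_cases hst : t = s
      · subst hst
        have := (adj_same _ _ _).1 h
        omega
      · have ht : t = !s := by cases s <;> cases t <;> simp_all
        subst ht
        have := (adj_diff _ _ _).1 h
        omega
    simp only [pos_vtx]
    unfold cyc nd
    omega

theorem walk_line {n : ℕ} (s : Bool) (k : ℕ) : ∀ i j : Fin (4 * n), i.val + k = j.val →
    ∃ p : (mobius n).Walk (vtx s i) (vtx s j), p.length = k := by
  induction k with
  | zero =>
    intro i j h
    obtain rfl : i = j := Fin.ext h
    exact ⟨SimpleGraph.Walk.nil, rfl⟩
  | succ k ih =>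
    intro i j h
    obtain ⟨p, hp⟩ := ih ⟨i.val + 1, by omega⟩ j (by simp; omega)
    exact ⟨SimpleGraph.Walk.cons ((adj_same _ _ _).2 (Or.inl rfl)) p, by simp [hp]⟩

theorem walk_same {n : ℕ} (s : Bool) (i j : Fin (4 * n)) :
    ∃ p : (mobius n).Walk (vtx s i) (vtx s j), p.length = nd i j := by
  rcases le_total i.val j.val with h | h
  · exact walk_line s _ i j (by unfold nd; omega)
  · obtain ⟨p, hp⟩ := walk_line s (nd i j) j i (by unfold nd; omega)
    exact ⟨p.reverse, by simp [hp]⟩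

/-- The walk from column `i` down to column `0`, across a twisted edge and down to column `j`. -/
theorem walk_around {n : ℕ} (s : Bool) (i j : Fin (4 * n)) (h : i ≤ j) :
    ∃ p : (mobius n).Walk (vtx s i) (vtx (!s) j), p.length = 4 * n - nd i j := by
  have hi := i.2
  have hj := j.2
  have hij : i.val ≤ j.val := h
  obtain ⟨p, hp⟩ := walk_same s i ⟨0, by omega⟩
  obtain ⟨q, hq⟩ := walk_same (!s) ⟨4 * n - 1, by omega⟩ j
  have e : (mobius n).Adj (vtx s ⟨0, by omega⟩) (vtx (!s) ⟨4 * n - 1, by omega⟩) :=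
    (adj_diff _ _ _).2 (by simp)
  refine ⟨p.append (SimpleGraph.Walk.cons e q), ?_⟩
  simp only [SimpleGraph.Walk.length_append, SimpleGraph.Walk.length_cons, hp, hq]
  unfold nd
  omega

/-- The involution exchanging columns `2k` and `2k + 1`. Exactly one of a column and its partner
carries a rung. -/
def partner {n : ℕ} (i : Fin (4 * n)) : Fin (4 * n) :=
  ⟨if i.val % 2 = 0 then i.val + 1 else i.val - 1, by split_ifs <;> omega⟩

theorem partner_partner {n : ℕ} (i : Fin (4 * n)) : partner (partner i) = i := by
  apply Fin.ext
  by_cases h : i.val % 2 = 0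
  · have h' : (i.val + 1) % 2 ≠ 0 := by omega
    simp [partner, h, h']
  · have h' : (i.val - 1) % 2 = 0 := by omega
    simp only [partner, if_neg h, if_pos h']
    omega

theorem adj_partner {n : ℕ} (s : Bool) (i : Fin (4 * n)) :
    (mobius n).Adj (vtx s i) (vtx s (partner i)) := by
  rw [adj_same]
  simp only [partner]
  split_ifs <;> omega

theorem adj_partner_rung {n : ℕ} (s : Bool) (i : Fin (4 * n)) :
    (mobius n).Adj (vtx s i) (vtx (!s) i) ∨
      (mobius n).Adj (vtx s (partner i)) (vtx (!s) (partner i)) := by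
  by_cases h : i.val % 4 = 0 ∨ i.val % 4 = 3
  · exact Or.inl ((adj_diff _ _ _).2 (Or.inl ⟨rfl, h⟩))
  · refine Or.inr ((adj_diff _ _ _).2 (Or.inl ⟨rfl, ?_⟩))
    simp only [partner]
    split_ifs <;> omega

theorem walk_switch {n : ℕ} (s : Bool) (i : Fin (4 * n)) :
    ∃ p : (mobius n).Walk (vtx s i) (vtx (!s) i), p.length ≤ 3 := by
  rcases adj_partner_rung s i with h | h
  · exact ⟨h.toWalk, by simp⟩
  · exact ⟨.cons (adj_partner s i) (.cons h (.cons (adj_partner (!s) i).symm .nil)), by simp⟩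

theorem walk_of_le {n : ℕ} (s t : Bool) (i j : Fin (4 * n)) (h : i ≤ j) :
    ∃ p : (mobius n).Walk (vtx s i) (vtx t j), p.length ≤ cyc (4 * n) (nd i j) + 3 := by
  obtain ⟨p, hp⟩ := walk_same s i j
  obtain ⟨q, hq⟩ := walk_around s i j h
  by_cases hst : t = s
  · subst hst
    rcases le_total (nd i j) (4 * n - nd i j) with hl | hl
    · exact ⟨p, by unfold cyc; omega⟩
    · obtain ⟨r, hr⟩ := walk_switch t j
      exact ⟨q.append r.reverse, by
        simp only [SimpleGraph.Walk.length_append, SimpleGraph.Walk.length_reverse]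
        unfold cyc; omega⟩
  · have ht : t = !s := by cases s <;> cases t <;> simp_all
    subst ht
    rcases le_total (nd i j) (4 * n - nd i j) with hl | hl
    · obtain ⟨r, hr⟩ := walk_switch s j
      exact ⟨p.append r, by
        simp only [SimpleGraph.Walk.length_append]
        unfold cyc; omega⟩
    · exact ⟨q, by unfold cyc; omega⟩

theorem exists_walk {n : ℕ} (x y : Fin (4 * n) ⊕ Fin (4 * n)) :
    ∃ p : (mobius n).Walk x y, p.length ≤ cyc (4 * n) (nd (pos x) (pos y)) + 3 := by
  obtain ⟨s, i, rfl⟩ := exists_vtx x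
  obtain ⟨t, j, rfl⟩ := exists_vtx y
  simp only [pos_vtx]
  rcases le_total i j with h | h
  · exact walk_of_le s t i j h
  · obtain ⟨p, hp⟩ := walk_of_le t s j i h
    refine ⟨p.reverse, ?_⟩
    have : nd i j = nd j i := by unfold nd; omega
    rw [SimpleGraph.Walk.length_reverse, this]
    exact hp

theorem cyc_le_dist {n : ℕ} (x y : Fin (4 * n) ⊕ Fin (4 * n)) :
    cyc (4 * n) (nd (pos x) (pos y)) ≤ (mobius n).dist x y := by
  obtain ⟨p, -⟩ := exists_walk x y
  obtain ⟨q, hq⟩ := p.reachable.exists_walk_length_eq_dist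
  exact hq ▸ cyc_le_length q

theorem dist_le_cyc {n : ℕ} (x y : Fin (4 * n) ⊕ Fin (4 * n)) :
    (mobius n).dist x y ≤ cyc (4 * n) (nd (pos x) (pos y)) + 3 := by
  obtain ⟨p, hp⟩ := exists_walk x y
  exact (SimpleGraph.dist_le p).trans hp

/-- Each column holds two vertices, so a sum over pairs of vertices is `4` times a sum over pairs
of columns. -/
theorem sum_pos_pos {n : ℕ} (F : ℕ → ℝ) (hF : ∀ k, k ≤ 4 * n → F (4 * n - k) = F k) :
    ∑ x : Fin (4 * n) ⊕ Fin (4 * n), ∑ y : Fin (4 * n) ⊕ Fin (4 * n), F (nd (pos x) (pos y)) =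
      16 * n * ∑ k ∈ Finset.range (4 * n), F k := by
  have h : ∀ x : Fin (4 * n) ⊕ Fin (4 * n),
      ∑ y : Fin (4 * n) ⊕ Fin (4 * n), F (nd (pos x) (pos y)) =
        2 * ∑ j : Fin (4 * n), F (nd (pos x) j) := by
    intro x
    rw [sum_vtx false, Finset.mul_sum]
    refine Finset.sum_congr rfl fun j _ => ?_
    simp only [pos_vtx]; ring
  simp only [h]
  rw [sum_vtx false, Finset.sum_congr rfl
    (g := fun i : Fin (4 * n) => 4 * ∑ j : Fin (4 * n), F (nd i j)), ← Finset.mul_sum,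
    sum_sum_nd _ F hF]
  · push_cast; ring
  · intro i _
    simp only [pos_vtx]; ring

theorem sum_cyc (n : ℕ) :
    ∑ x : Fin (4 * n) ⊕ Fin (4 * n), ∑ y : Fin (4 * n) ⊕ Fin (4 * n),
      (cyc (4 * n) (nd (pos x) (pos y)) : ℝ) = 64 * (n : ℝ) ^ 3 := by
  rw [sum_pos_pos (fun d => (cyc (4 * n) d : ℝ))]
  · have h := sum_tent (2 * n)
    rw [show 2 * n + 2 * n = 4 * n by ring] at h
    rw [← Nat.cast_sum]
    unfold cyc
    rw [h]; push_cast; ring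
  · intro k hk
    have : cyc (4 * n) (4 * n - k) = cyc (4 * n) k := by unfold cyc; omega
    exact congrArg _ this

/-- The double sum of distances, that is, twice the Wiener index. -/
theorem wiener_bounds (n : ℕ) :
    64 * (n : ℝ) ^ 3 ≤ ∑ x : Fin (4 * n) ⊕ Fin (4 * n), ∑ y : Fin (4 * n) ⊕ Fin (4 * n),
        ((mobius n).dist x y : ℝ) ∧
      ∑ x : Fin (4 * n) ⊕ Fin (4 * n), ∑ y : Fin (4 * n) ⊕ Fin (4 * n),
        ((mobius n).dist x y : ℝ) ≤ 64 * (n : ℝ) ^ 3 + 192 * (n : ℝ) ^ 2 := by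
  rw [← sum_cyc]
  constructor
  · exact Finset.sum_le_sum fun x _ => Finset.sum_le_sum fun y _ => by
      exact_mod_cast cyc_le_dist x y
  · have h : (192 * (n : ℝ) ^ 2) =
        ∑ _x : Fin (4 * n) ⊕ Fin (4 * n), ∑ _y : Fin (4 * n) ⊕ Fin (4 * n), (3 : ℝ) := by
      simp; ring
    rw [h, ← Finset.sum_add_distrib]
    refine Finset.sum_le_sum fun x _ => ?_
    rw [← Finset.sum_add_distrib]
    exact Finset.sum_le_sum fun y _ => by exact_mod_cast dist_le_cyc x y

/-! ### The quadratic form of the Laplacian and the Green kernel -/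

open Matrix in
/-- The Laplacian is self-adjoint. -/
theorem lap_symm {n : ℕ} (f g : Fin (4 * n) ⊕ Fin (4 * n) → ℝ) :
    ∑ x, f x * ((mobius n).lapMatrix ℝ *ᵥ g) x = ∑ x, ((mobius n).lapMatrix ℝ *ᵥ f) x * g x := by
  have h := Matrix.dotProduct_mulVec f ((mobius n).lapMatrix ℝ) g
  rw [← Matrix.mulVec_transpose, (SimpleGraph.isSymm_lapMatrix (mobius n) (R := ℝ)).eq] at h
  exact h

open Matrix in
/-- Coercivity of the Laplacian on the antisymmetric part, with a constant independent of `n`: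
`u_i - v_i` is the difference along a rung, or along the three edges through the rung of the
partner column. -/
theorem sum_sq_antisymm_le {n : ℕ} (f : Fin (4 * n) ⊕ Fin (4 * n) → ℝ) :
    ∑ i, (f (vtx false i) - f (vtx true i)) ^ 2 ≤
      12 * ∑ x, f x * ((mobius n).lapMatrix ℝ *ᵥ f) x := by
  set q : Fin (4 * n) ⊕ Fin (4 * n) → ℝ :=
    fun x => ∑ y, if (mobius n).Adj x y then (f x - f y) ^ 2 else 0 with hq
  have hq0 : ∀ x, 0 ≤ q x := fun x => Finset.sum_nonneg fun y _ => by split_ifs <;> positivity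
  have hadj : ∀ x y, (mobius n).Adj x y → (f x - f y) ^ 2 ≤ q x := by
    intro x y hxy
    have := Finset.single_le_sum (f := fun y => if (mobius n).Adj x y then (f x - f y) ^ 2 else 0)
      (fun y _ => by split_ifs <;> positivity) (Finset.mem_univ y)
    simpa only [if_pos hxy] using this
  have hsum : ∑ x, f x * ((mobius n).lapMatrix ℝ *ᵥ f) x = (∑ x, q x) / 2 := by
    have h := SimpleGraph.lapMatrix_toLinearMap₂' ℝ (mobius n) f
    rw [Matrix.toLinearMap₂'_apply'] at h
    exact h
  -- `q x` is the share of the vertex `x` in the Dirichlet form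
  have hpt : ∀ i : Fin (4 * n), (f (vtx false i) - f (vtx true i)) ^ 2 ≤
      3 * (q (vtx false i) + q (vtx true i) + q (vtx false (partner i))) := by
    intro i
    have h0 := hq0 (vtx false i)
    have h1 := hq0 (vtx true i)
    have h2 := hq0 (vtx false (partner i))
    rcases adj_partner_rung false i with h | h
    · have := hadj _ _ h
      simp only [Bool.not_false] at this
      linarith
    · have a1 := hadj _ _ h
      have a2 := hadj _ _ (adj_partner false i)
      have a3 := hadj _ _ (adj_partner true i)
      simp only [Bool.not_false] at a1
      set a := f (vtx false i)
      set b := f (vtx true i)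
      set c := f (vtx false (partner i))
      set d := f (vtx true (partner i))
      nlinarith [sq_nonneg ((a - c) - (c - d)), sq_nonneg ((a - c) + (b - d)),
        sq_nonneg ((c - d) + (b - d))]
  have hperm : ∑ i : Fin (4 * n), q (vtx false (partner i)) = ∑ i, q (vtx false i) :=
    Equiv.sum_comp (Function.Involutive.toPerm partner partner_partner) (fun i => q (vtx false i))
  have hall : ∑ x, q x = ∑ i, q (vtx false i) + ∑ i, q (vtx true i) := by
    rw [sum_vtx false, Finset.sum_add_distrib]; rfl
  have htrue : 0 ≤ ∑ i : Fin (4 * n), q (vtx true i) := Finset.sum_nonneg fun i _ => hq0 _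
  calc _ ≤ ∑ i : Fin (4 * n),
        3 * (q (vtx false i) + q (vtx true i) + q (vtx false (partner i))) :=
        Finset.sum_le_sum fun i _ => hpt i
    _ ≤ _ := by
        rw [← Finset.mul_sum, Finset.sum_add_distrib, Finset.sum_add_distrib, hperm, hsum, hall]
        linarith

theorem sum_sum_column {n : ℕ} (f : Fin (4 * n) ⊕ Fin (4 * n) → ℝ) (x) :
    ∑ y, (if pos x = pos y then (1 : ℝ) else 0) * f y =
      f (vtx false (pos x)) + f (vtx true (pos x)) := by
  rw [sum_vtx false]
  simp only [pos_vtx, Bool.not_false, ite_mul, one_mul, zero_mul]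
  rw [Finset.sum_add_distrib]
  simp

open Matrix in
/-- The quadratic form of the Green kernel at an eigenvector: apply `green_lap` in the second
variable and move the Laplacian onto the eigenvector. -/
theorem eigen_green {n : ℕ} (f : Fin (4 * n) ⊕ Fin (4 * n) → ℝ) (l : ℝ)
    (hf : (mobius n).lapMatrix ℝ *ᵥ f = l • f) :
    l * ∑ x, ∑ y, f x * green (4 * n) (nd (pos x) (pos y)) * f y =
      ∑ i, (f (vtx false i) + f (vtx true i)) ^ 2 - (∑ x, f x) ^ 2 / (4 * n) := by
  have h : ∀ x, l * ∑ y, green (4 * n) (nd (pos x) (pos y)) * f y =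
      f (vtx false (pos x)) + f (vtx true (pos x)) - (∑ y, f y) / (4 * n) := by
    intro x
    have h1 := lap_symm (fun y => green (4 * n) (nd (pos x) (pos y))) f
    have h2 : ((mobius n).lapMatrix ℝ *ᵥ fun y => green (4 * n) (nd (pos x) (pos y))) =
        fun y => (if pos x = pos y then 1 else 0) - 1 / (4 * n : ℝ) := by
      funext y
      rw [lap_pos (fun j => green (4 * n) (nd (pos x) j))]
      exact green_lap _ _
    rw [hf, h2] at h1
    rw [← sum_sum_column, Finset.mul_sum, Finset.sum_div, ← Finset.sum_sub_distrib]
    convert h1 using 2 with y _ y _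
    · simp; ring
    · ring
  have h3 : l * ∑ x, ∑ y, f x * green (4 * n) (nd (pos x) (pos y)) * f y =
      ∑ x, f x * (l * ∑ y, green (4 * n) (nd (pos x) (pos y)) * f y) := by
    rw [Finset.mul_sum]
    refine Finset.sum_congr rfl fun x _ => ?_
    rw [Finset.mul_sum, Finset.mul_sum, Finset.mul_sum]
    exact Finset.sum_congr rfl fun y _ => by ring
  rw [h3]
  simp only [h, mul_sub]
  rw [Finset.sum_sub_distrib, ← Finset.sum_mul, sum_vtx false (fun x => f x * (_ + _))]
  congr 1
  · refine Finset.sum_congr rfl fun i _ => ?_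
    simp; ring
  · ring

theorem sum_green (n : ℕ) (hn : 0 < n) :
    ∑ x : Fin (4 * n) ⊕ Fin (4 * n), ∑ y : Fin (4 * n) ⊕ Fin (4 * n),
      green (4 * n) (nd (pos x) (pos y)) = -(4 * n * (16 * (n : ℝ) ^ 2 - 1) / 3) := by
  have hn' : (n : ℝ) ≠ 0 := by exact_mod_cast hn.ne'
  rw [sum_pos_pos _ fun k hk => green_symm hk]
  have h := sum_parabola (4 * n)
  unfold green
  rw [← Finset.sum_div, Finset.sum_neg_distrib, h]
  push_cast
  field_simp
  ring

open Matrix in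
/-- The previous identity solved for the quadratic form, in a shape that is also valid for the
eigenvalue `0` (where `0⁻¹ = 0` and the eigenvector is constant by connectedness). For nonzero
eigenvalues the term with `∑ x, f x` vanishes. -/
theorem eigen_green' {n : ℕ} (hn : 0 < n) (f : Fin (4 * n) ⊕ Fin (4 * n) → ℝ) (l : ℝ)
    (hf : (mobius n).lapMatrix ℝ *ᵥ f = l • f) :
    ∑ x, ∑ y, f x * green (4 * n) (nd (pos x) (pos y)) * f y =
      l⁻¹ * ∑ i, (f (vtx false i) + f (vtx true i)) ^ 2 -
        (∑ x, f x) ^ 2 * ((16 * (n : ℝ) ^ 2 - 1) / (48 * n)) := by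
  have hn' : (n : ℝ) ≠ 0 := by exact_mod_cast hn.ne'
  by_cases hl : l = 0
  · subst hl
    rw [zero_smul, SimpleGraph.lapMatrix_mulVec_eq_zero_iff_forall_reachable] at hf
    have hc : ∃ c, ∀ x, f x = c :=
      ⟨f (vtx false ⟨0, by omega⟩), fun x => hf _ _ ((exists_walk _ _).choose.reachable)⟩
    obtain ⟨c, hc⟩ := hc
    simp only [hc]
    have : ∑ x : Fin (4 * n) ⊕ Fin (4 * n), ∑ y : Fin (4 * n) ⊕ Fin (4 * n),
        c * green (4 * n) (nd (pos x) (pos y)) * c = c ^ 2 * -(4 * n * (16 * (n : ℝ) ^ 2 - 1) / 3) := by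
      rw [← sum_green n hn, Finset.mul_sum]
      refine Finset.sum_congr rfl fun x _ => ?_
      rw [Finset.mul_sum]
      exact Finset.sum_congr rfl fun y _ => by ring
    rw [this]
    simp
    field_simp
    ring
  · have h := eigen_green f l hf
    have h0 : ∑ x, f x = 0 := by
      have h1 := lap_symm (fun _ => 1) f
      rw [SimpleGraph.lapMatrix_mulVec_const_eq_zero, hf] at h1
      simp only [Pi.smul_apply, smul_eq_mul, one_mul, Pi.zero_apply, zero_mul,
        Finset.sum_const_zero, ← Finset.mul_sum] at h1
      exact (mul_eq_zero.1 h1).resolve_left hl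
    rw [h0] at h ⊢
    simp only [ne_eq, OfNat.ofNat_ne_zero, not_false_eq_true, zero_pow, zero_div, sub_zero,
      zero_mul] at h ⊢
    rw [← h, inv_mul_cancel_left₀ hl]

/-! ### Bounds for the Kirchhoff index -/

open Matrix in
/-- The symmetric parts of the eigenvectors contribute exactly `(16 n² - 1) / 12` to the sum of
inverse eigenvalues, the antisymmetric parts at most `6` for each of the `8 n` eigenvectors. -/
theorem sum_inv_bounds {n : ℕ} (hn : 0 < n) (l : Fin (4 * n) ⊕ Fin (4 * n) → ℝ)
    (hl : ((mobius n).lapMatrix ℝ).charpoly = ∏ v, (Polynomial.X - Polynomial.C (l v))) :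
    (16 * (n : ℝ) ^ 2 - 1) / 12 ≤ ∑ v, (l v)⁻¹ ∧
      ∑ v, (l v)⁻¹ ≤ (16 * (n : ℝ) ^ 2 - 1) / 12 + 48 * n := by
  have hn' : (n : ℝ) ≠ 0 := by exact_mod_cast hn.ne'
  obtain ⟨e, m, he, hnorm, hcomp, hchar⟩ :=
    exists_eigendata _ (SimpleGraph.isHermitian_lapMatrix ℝ (mobius n))
  have hlm : ∑ v, (l v)⁻¹ = ∑ v, (m v)⁻¹ := by
    have h := sum_inv_of_prod_eq l m (hl.symm.trans hchar)
    exact h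
  rw [hlm]
  -- the Green kernel is zero on the diagonal, so its trace vanishes
  have htr : ∑ v, ∑ x, ∑ y, e v x * green (4 * n) (nd (pos x) (pos y)) * e v y = 0 := by
    rw [trace_identity e hcomp]
    refine Finset.sum_eq_zero fun x _ => ?_
    simp [nd, green]
  have hone : ∑ v, (∑ x, e v x) ^ 2 = 8 * n := by
    have h := trace_identity e hcomp (fun _ _ => 1)
    simp only [mul_one] at h
    have h2 : ∀ v, (∑ x, e v x) ^ 2 = ∑ x, ∑ y, e v x * e v y := fun v => by
      rw [sq, Finset.sum_mul_sum]
    simp only [h2, h]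
    simp; ring
  have hs : ∑ v, (m v)⁻¹ * ∑ i, (e v (vtx false i) + e v (vtx true i)) ^ 2 =
      (16 * (n : ℝ) ^ 2 - 1) / 6 := by
    simp only [fun v => eigen_green' hn (e v) (m v) (he v)] at htr
    rw [Finset.sum_sub_distrib, ← Finset.sum_mul, hone] at htr
    rw [sub_eq_zero.1 htr]
    field_simp
    ring
  have hsplit : ∀ v, ∑ i, (e v (vtx false i) + e v (vtx true i)) ^ 2 +
      ∑ i, (e v (vtx false i) - e v (vtx true i)) ^ 2 = 2 := by
    intro v
    have h := hnorm v
    rw [sum_vtx false] at h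
    rw [← Finset.sum_add_distrib, ← mul_one (2 : ℝ), ← h, Finset.mul_sum]
    exact Finset.sum_congr rfl fun i _ => by simp only [Bool.not_false]; ring
  have hm : ∀ v, ∑ i, (e v (vtx false i) - e v (vtx true i)) ^ 2 ≤ 12 * m v := by
    intro v
    refine (sum_sq_antisymm_le (e v)).trans (le_of_eq ?_)
    have h : ∑ x, e v x * (m v • e v) x = m v * ∑ x, e v x ^ 2 := by
      rw [Finset.mul_sum]
      exact Finset.sum_congr rfl fun x _ => by simp only [Pi.smul_apply, smul_eq_mul]; ring
    rw [he v, h, hnorm v, mul_one]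
  have ha0 : ∀ v, 0 ≤ ∑ i, (e v (vtx false i) - e v (vtx true i)) ^ 2 :=
    fun v => Finset.sum_nonneg fun i _ => sq_nonneg _
  have hm0 : ∀ v, 0 ≤ m v := fun v => by linarith [ha0 v, hm v]
  have htwo : 2 * ∑ v, (m v)⁻¹ = (16 * (n : ℝ) ^ 2 - 1) / 6 +
      ∑ v, (m v)⁻¹ * ∑ i, (e v (vtx false i) - e v (vtx true i)) ^ 2 := by
    rw [← hs, ← Finset.sum_add_distrib, Finset.mul_sum]
    refine Finset.sum_congr rfl fun v _ => ?_
    rw [← mul_add, hsplit, mul_comm]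
  have hlow : 0 ≤ ∑ v, (m v)⁻¹ * ∑ i, (e v (vtx false i) - e v (vtx true i)) ^ 2 :=
    Finset.sum_nonneg fun v _ => mul_nonneg (inv_nonneg.2 (hm0 v)) (ha0 v)
  have hup : ∑ v, (m v)⁻¹ * ∑ i, (e v (vtx false i) - e v (vtx true i)) ^ 2 ≤ 96 * n := by
    have h : ∀ v, (m v)⁻¹ * ∑ i, (e v (vtx false i) - e v (vtx true i)) ^ 2 ≤ 12 := by
      intro v
      rcases (hm0 v).eq_or_lt with h | h
      · rw [← h]; norm_num
      · rw [inv_mul_le_iff₀ h]; linarith [hm v]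
    refine (Finset.sum_le_sum fun v _ => h v).trans (le_of_eq ?_)
    simp; ring
  constructor <;> linarith

theorem kirchhoff_bounds {n : ℕ} (hn : 0 < n) (μs : Fin (8 * n) → ℝ)
    (h0 : μs ⟨0, by omega⟩ = 0)
    (h : ((mobius n).lapMatrix ℝ).charpoly = ∏ i, (Polynomial.X - Polynomial.C (μs i))) :
    (16 * (n : ℝ) ^ 2 - 1) / 12 ≤
        ∑ i ∈ Finset.univ.erase (⟨0, by omega⟩ : Fin (8 * n)), (μs i)⁻¹ ∧
      ∑ i ∈ Finset.univ.erase (⟨0, by omega⟩ : Fin (8 * n)), (μs i)⁻¹ ≤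
        (16 * (n : ℝ) ^ 2 - 1) / 12 + 48 * n := by
  -- the term at index `0` is `0⁻¹ = 0`
  have hall : ∑ i ∈ Finset.univ.erase (⟨0, by omega⟩ : Fin (8 * n)), (μs i)⁻¹ = ∑ i, (μs i)⁻¹ :=
    Finset.sum_erase _ (by rw [h0, inv_zero])
  let eqv : Fin (4 * n) ⊕ Fin (4 * n) ≃ Fin (8 * n) :=
    finSumFinEquiv.trans (finCongr (by omega))
  rw [hall, ← eqv.sum_comp]
  exact sum_inv_bounds hn (fun v => μs (eqv v)) (h.trans (eqv.prod_comp _).symm)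

open Filter in
theorem tendsto_of_cubic_bounds (f : ℕ → ℝ) (a c d : ℝ)
    (h : ∀ n : ℕ, 2 ≤ n → a * (n : ℝ) ^ 3 - c * n ^ 2 ≤ f n ∧ f n ≤ a * (n : ℝ) ^ 3 + d * n ^ 2) :
    Tendsto (fun n : ℕ => f n / (n : ℝ) ^ 3) atTop (nhds a) := by
  have hinv := tendsto_one_div_atTop_nhds_zero_nat (𝕜 := ℝ)
  have h1 : Tendsto (fun n : ℕ => a - c * (1 / (n : ℝ))) atTop (nhds a) := by
    simpa using (hinv.const_mul c).const_sub a
  have h2 : Tendsto (fun n : ℕ => a + d * (1 / (n : ℝ))) atTop (nhds a) := by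
    simpa using (hinv.const_mul d).const_add a
  refine tendsto_of_tendsto_of_tendsto_of_le_of_le' h1 h2 ?_ ?_
  · filter_upwards [eventually_ge_atTop 2] with n hn
    have hn0 : (0 : ℝ) < n := by exact_mod_cast (by omega : 0 < n)
    rw [le_div_iff₀ (by positivity)]
    refine le_trans (le_of_eq ?_) (h n hn).1
    field_simp
  · filter_upwards [eventually_ge_atTop 2] with n hn
    have hn0 : (0 : ℝ) < n := by exact_mod_cast (by omega : 0 < n)
    rw [div_le_iff₀ (by positivity)]
    refine (h n hn).2.trans (le_of_eq ?_)
    field_simp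
/-! ### The limit -/

theorem stmt_18 (W Kf : ℕ → ℝ)
    (hW : ∀ n (_hn : 2 ≤ n),
      W n = (∑ x : Fin (4 * n) ⊕ Fin (4 * n), ∑ y : Fin (4 * n) ⊕ Fin (4 * n),
        ((mobius n).dist x y : ℝ)) / 2)
    (hKf : ∀ n (_hn : 2 ≤ n), ∃ μs : Fin (8 * n) → ℝ, Monotone μs ∧
      μs ⟨0, by omega⟩ = 0 ∧ (∀ i : Fin (8 * n), i ≠ ⟨0, by omega⟩ → 0 < μs i) ∧
      ((mobius n).lapMatrix ℝ).charpoly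
        = ∏ i : Fin (8 * n), (Polynomial.X - Polynomial.C (μs i)) ∧
      Kf n = (8 * n : ℝ) * ∑ i ∈ Finset.univ.erase (⟨0, by omega⟩ : Fin (8 * n)), (μs i)⁻¹) :
    Filter.Tendsto (fun n => W n / Kf n) Filter.atTop (nhds 3) := by
  have hWlim : Filter.Tendsto (fun n : ℕ => W n / (n : ℝ) ^ 3) Filter.atTop (nhds 32) := by
    refine tendsto_of_cubic_bounds W 32 0 96 fun n hn => ?_
    obtain ⟨h1, h2⟩ := wiener_bounds n
    rw [hW n hn]
    constructor <;> linarith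
  have hKlim : Filter.Tendsto (fun n : ℕ => Kf n / (n : ℝ) ^ 3) Filter.atTop (nhds (32 / 3)) := by
    refine tendsto_of_cubic_bounds Kf (32 / 3) 1 384 fun n hn => ?_
    obtain ⟨μs, -, h0, -, hchar, hK⟩ := hKf n hn
    obtain ⟨h1, h2⟩ := kirchhoff_bounds (by omega) μs h0 hchar
    have hn1 : (2 : ℝ) ≤ n := by exact_mod_cast hn
    have h8 : (0 : ℝ) ≤ 8 * n := by positivity
    have h3 := mul_le_mul_of_nonneg_left h1 h8
    have h4 := mul_le_mul_of_nonneg_left h2 h8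
    rw [hK]
    constructor
    · refine le_trans ?_ h3
      nlinarith
    · refine h4.trans ?_
      nlinarith
  have hlim := hWlim.div hKlim (by norm_num)
  rw [show (32 : ℝ) / (32 / 3) = 3 by norm_num] at hlim
  refine hlim.congr' ?_
  filter_upwards [Filter.eventually_gt_atTop 0] with n hn
  have hn0 : (n : ℝ) ≠ 0 := by exact_mod_cast hn.ne'
  exact div_div_div_cancel_right₀ (pow_ne_zero 3 hn0) _ _
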